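/- arXiv:2001.09836 — 2 statements merged into one kernel-verified Lean document; each statement's English description precedes it below -/
import Mathlib

section
/- The butterfly graph B (two triangles sharing a single common vertex, i.e. vertices {0,1,2,3,4} with edges {1,2},{3,4} and {0,i} for i=1,2,3,4) has growth rate γ(B) = 11/3. -/
open MeasureTheory Filter Topology
open scoped ENNReal Classical

/-- The ballistic deposition height process on a graph `G`, started from `h0`,
driven by the sequence of chosen vertices `X`. -/
noncomputable def heightProcess {V : Type*} [Fintype V] (G : SimpleGraph V)
    (h0 : V → ℕ) (X : ℕ → V) : ℕ → V → ℕ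
  | 0 => h0
  | n + 1 => fun x =>
      if x = X n then
        1 + Finset.univ.sup (fun y =>
          if y = x ∨ G.Adj x y then heightProcess G h0 X n y else 0)
      else heightProcess G h0 X n x

/-- `X` is an i.i.d. sequence of uniformly distributed `V`-valued random variables on `(Ω, μ)`:
every finite cylinder event has the product-of-uniform probabilities. -/
def IsUniformIID {V : Type*} [Fintype V] {Ω : Type*} [MeasurableSpace Ω]
    (μ : Measure Ω) (X : ℕ → Ω → V) : Prop :=
  (∀ (n : ℕ) (v : V), MeasurableSet {ω | X n ω = v}) ∧
  (∀ (n : ℕ) (f : ℕ → V), μ {ω | ∀ k < n, X k ω = f k} = (Fintype.card V : ℝ≥0∞)⁻¹ ^ n)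

/-- `γ` is the growth rate of `G`: `γ > 0` and, for any i.i.d. uniform driving sequence,
almost surely `(#V/n) · max_x H_{x,n} → γ` and `(#V/n) · min_x H_{x,n} → γ`. -/
def IsGrowthRate {V : Type*} [Fintype V] (G : SimpleGraph V) (γ : ℝ) : Prop :=
  0 < γ ∧
  ∀ {Ω : Type} [MeasurableSpace Ω] (μ : Measure Ω) [IsProbabilityMeasure μ]
    (X : ℕ → Ω → V), IsUniformIID μ X →
    (∀ᵐ ω ∂μ, Tendsto (fun n : ℕ =>
        (Fintype.card V : ℝ) *
          (⨆ x : V, (heightProcess G (fun _ => 0) (fun k => X k ω) n x : ℝ)) / n)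
      atTop (𝓝 γ)) ∧
    (∀ᵐ ω ∂μ, Tendsto (fun n : ℕ =>
        (Fintype.card V : ℝ) *
          (⨅ x : V, (heightProcess G (fun _ => 0) (fun k => X k ω) n x : ℝ)) / n)
      atTop (𝓝 γ))


/-- The butterfly graph: two triangles sharing the single common vertex `0`, i.e. vertices
`{0,1,2,3,4}` with edges `{1,2}`, `{3,4}` and `{0,i}` for `i = 1,2,3,4`. -/
def butterfly : SimpleGraph (Fin 5) :=
  SimpleGraph.fromRel fun i j => i = 0 ∨ (i = 1 ∧ j = 2) ∨ (i = 3 ∧ j = 4)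

/-!
Let `p` and `q` be the maximal heights over the two triangles of the butterfly. Their maximum does
not have a constant drift, since it depends on the gap `|p - q|`; but adding the bounded correction
`2/3 * 2^(-|p - q|)`, which solves the Poisson equation of the gap chain, gives a potential whose
expected increment is `11/15` at every step. A sub-Gaussian (Azuma) bound and Borel-Cantelli then
give `max H / n → 11/15` almost surely. Every vertex is chosen with positive frequency, hence
within any time interval `[r n, n)`, `r < 1`, so heights propagate along the paths of the graph in
time `o(n)` and the minimum grows at the same rate as the maximum.
-/

open ProbabilityTheory
open scoped NNReal

section SubGaussian

variable {Ω : Type*} [MeasurableSpace Ω] {μ : Measure Ω} {c : ℝ≥0}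

theorem hasSubgaussianMGF_map_iff {Ω' : Type*} [MeasurableSpace Ω'] {T : Ω → Ω'} {Y : Ω' → ℝ}
    (hT : Measurable T) (hY : Measurable Y) :
    HasSubgaussianMGF Y c (μ.map T) ↔ HasSubgaussianMGF (Y ∘ T) c μ := by
  rw [← HasSubgaussianMGF.id_map_iff hY.aemeasurable, Measure.map_map hY hT,
    HasSubgaussianMGF.id_map_iff (hY.comp hT).aemeasurable]

theorem hasSubgaussianMGF_prod_add {Ω' : Type*} [MeasurableSpace Ω'] {ν : Measure Ω'} [SFinite ν]
    [SFinite μ] {c' : ℝ≥0} {Y : Ω → ℝ} {Z : Ω → Ω' → ℝ} (hZm : Measurable (Function.uncurry Z))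
    (hY : HasSubgaussianMGF Y c μ) (hZ : ∀ ω, HasSubgaussianMGF (Z ω) c' ν) :
    HasSubgaussianMGF (fun p : Ω × Ω' ↦ Y p.1 + Z p.1 p.2) (c + c') (μ.prod ν) := by
  have hYm : AEMeasurable (fun p : Ω × Ω' ↦ Y p.1) (μ.prod ν) := hY.aemeasurable.comp_fst
  have hint (t : ℝ) : Integrable (fun p : Ω × Ω' ↦ Real.exp (t * (Y p.1 + Z p.1 p.2)))
      (μ.prod ν) := by
    have hm : AEStronglyMeasurable (fun p : Ω × Ω' ↦ Real.exp (t * (Y p.1 + Z p.1 p.2)))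
        (μ.prod ν) :=
      (Real.measurable_exp.comp_aemeasurable
        ((hYm.add hZm.aemeasurable).const_mul t)).aestronglyMeasurable
    refine (integrable_prod_iff hm).2 ⟨ae_of_all _ fun ω ↦ ?_, ?_⟩
    · simpa only [mul_add, Real.exp_add] using ((hZ ω).integrable_exp_mul t).const_mul _
    · refine ((hY.integrable_exp_mul t).mul_const (Real.exp (c' * t ^ 2 / 2))).mono'
        hm.norm.integral_prod_right' (ae_of_all _ fun ω ↦ ?_)
      simp only [Real.norm_eq_abs, Real.abs_exp]
      simp only [mul_add, Real.exp_add, integral_const_mul]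
      rw [abs_of_nonneg (by positivity)]
      exact mul_le_mul_of_nonneg_left ((hZ ω).mgf_le t) (Real.exp_pos _).le
  refine ⟨hint, fun t ↦ ?_⟩
  calc mgf (fun p : Ω × Ω' ↦ Y p.1 + Z p.1 p.2) (μ.prod ν) t
      = ∫ ω, Real.exp (t * Y ω) * mgf (Z ω) ν t ∂μ := by
        rw [mgf, integral_prod _ (hint t)]
        simp only [mul_add, Real.exp_add, integral_const_mul, mgf]
    _ ≤ ∫ ω, Real.exp (t * Y ω) * Real.exp (c' * t ^ 2 / 2) ∂μ :=
        integral_mono_of_nonneg (ae_of_all _ fun ω ↦ mul_nonneg (Real.exp_pos _).le mgf_nonneg)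
          ((hY.integrable_exp_mul t).mul_const _)
          (ae_of_all _ fun ω ↦ mul_le_mul_of_nonneg_left ((hZ ω).mgf_le t) (Real.exp_pos _).le)
    _ ≤ Real.exp (c * t ^ 2 / 2) * Real.exp (c' * t ^ 2 / 2) := by
        rw [integral_mul_const]
        exact mul_le_mul_of_nonneg_right (hY.mgf_le t) (Real.exp_pos _).le
    _ = Real.exp ((c + c' : ℝ≥0) * t ^ 2 / 2) := by
        rw [← Real.exp_add, NNReal.coe_add]
        ring_nf

theorem hasSubgaussianMGF_mono {c' : ℝ≥0} {Y : Ω → ℝ} (hY : HasSubgaussianMGF Y c μ)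
    (hc : c ≤ c') : HasSubgaussianMGF Y c' μ :=
  ⟨hY.integrable_exp_mul, fun t ↦ (hY.mgf_le t).trans (by gcongr)⟩

theorem ae_eventually_lt_mul_of_hasSubgaussianMGF [IsFiniteMeasure μ] {Y : ℕ → Ω → ℝ}
    (hY : ∀ n : ℕ, HasSubgaussianMGF (Y n) (n * c) μ) {ε : ℝ} (hε : 0 < ε) :
    ∀ᵐ ω ∂μ, ∀ᶠ n : ℕ in atTop, Y n ω < ε * n := by
  -- The tail bound is trivial for the parameter `0`, where Lean's division gives `0`.
  wlog hc : 0 < c generalizing c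
  · exact this (c := c + 1)
      (fun n ↦ hasSubgaussianMGF_mono (hY n) (by gcongr; exact le_self_add)) (by positivity)
  set r := Real.exp (-ε ^ 2 / (2 * c)) with hr
  have hr1 : r < 1 := Real.exp_lt_one_iff.2 (div_neg_of_neg_of_pos (by nlinarith) (by positivity))
  have htail (n : ℕ) : μ.real {ω | ε * n ≤ Y n ω} ≤ r ^ n := by
    refine ((hY n).measure_ge_le (by positivity)).trans_eq ?_
    rw [hr, ← Real.exp_nat_mul]
    rcases n.eq_zero_or_pos with rfl | _
    · simp
    · push_cast
      field_simp
  have hsum : Summable fun n : ℕ ↦ μ.real {ω | ε * n ≤ Y n ω} :=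
    (summable_geometric_of_lt_one (Real.exp_pos _).le hr1).of_nonneg_of_le
      (fun _ ↦ measureReal_nonneg) htail
  have hfin := hsum.tsum_ofReal_ne_top
  simp only [ofReal_measureReal (measure_ne_top μ _)] at hfin
  filter_upwards [ae_eventually_notMem hfin] with ω hω
  filter_upwards [hω] with n hn using not_le.1 hn

theorem ae_tendsto_div_of_hasSubgaussianMGF [IsFiniteMeasure μ] {Y : ℕ → Ω → ℝ}
    (hY : ∀ n : ℕ, HasSubgaussianMGF (Y n) (n * c) μ) :
    ∀ᵐ ω ∂μ, Tendsto (fun n : ℕ ↦ Y n ω / n) atTop (𝓝 0) := by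
  have hpos (j : ℕ) : (0 : ℝ) < 1 / (j + 1) := by positivity
  have hupper := ae_all_iff.2 fun j ↦ ae_eventually_lt_mul_of_hasSubgaussianMGF hY (hpos j)
  have hlower := ae_all_iff.2 fun j ↦
    ae_eventually_lt_mul_of_hasSubgaussianMGF (fun n ↦ (hY n).neg) (hpos j)
  filter_upwards [hupper, hlower] with ω hup hlow
  rw [Metric.tendsto_nhds]
  intro ε hε
  obtain ⟨j, hj⟩ := exists_nat_one_div_lt hε
  filter_upwards [hup j, hlow j, eventually_gt_atTop 0] with n hn hn' hn0
  have hn0 : (0 : ℝ) < n := by exact_mod_cast hn0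
  rw [Real.dist_0_eq_abs, abs_div, Nat.abs_cast, div_lt_iff₀ hn0]
  exact (abs_lt.2 ⟨neg_lt.1 hn', hn⟩).trans (by gcongr)

end SubGaussian

section UniformIID

variable {V Ω σ : Type*} {X : ℕ → Ω → V} {step : V → σ → σ} {S : ℕ → Ω → σ} {s₀ : σ}

theorem exists_eq_apply_prefix (hS₀ : ∀ ω, S 0 ω = s₀)
    (hS : ∀ n ω, S (n + 1) ω = step (X n ω) (S n ω)) (n : ℕ) :
    ∃ T : (Fin n → V) → σ, ∀ ω, S n ω = T fun i ↦ X i ω := by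
  induction n with
  | zero => exact ⟨fun _ ↦ s₀, hS₀⟩
  | succ n ih =>
    obtain ⟨T, hT⟩ := ih
    exact ⟨fun w ↦ step (w (Fin.last n)) (T (Fin.init w)), fun ω ↦ by rw [hS, hT]; rfl⟩

variable [Fintype V] [MeasurableSpace Ω] {μ : Measure Ω}

theorem IsUniformIID.measurable [MeasurableSpace V] (hX : IsUniformIID μ X) (n : ℕ) :
    Measurable (X n) :=
  measurable_to_countable' (hX.1 n)

theorem IsUniformIID.map_prefix_prodMk [MeasurableSpace V] [MeasurableSingletonClass V]
    [Nonempty V] (hX : IsUniformIID μ X) (n : ℕ) :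
    μ.map (fun ω ↦ (fun i : Fin n ↦ X i ω, X n ω)) =
      (μ.map fun ω (i : Fin n) ↦ X i ω).prod (PMF.uniformOfFintype V).toMeasure := by
  have hprefix (m : ℕ) : Measurable fun ω (i : Fin m) ↦ X i ω :=
    measurable_pi_lambda _ fun i ↦ hX.measurable i
  refine Measure.ext_of_singleton fun ⟨w, v⟩ ↦ ?_
  let f : ℕ → V := fun k ↦ if h : k < n then w ⟨k, h⟩ else v
  have hw : (fun ω (i : Fin n) ↦ X i ω) ⁻¹' {w} = {ω | ∀ k < n, X k ω = f k} := by
    ext ω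
    simp +contextual [f, funext_iff, Fin.forall_iff]
  have hwv : (fun ω ↦ (fun i : Fin n ↦ X i ω, X n ω)) ⁻¹' {(w, v)} =
      {ω | ∀ k < n + 1, X k ω = f k} := by
    ext ω
    simp only [Set.mem_ofPred_eq, Nat.forall_lt_succ_right]
    simp +contextual [f, funext_iff, Fin.forall_iff]
  rw [Measure.map_apply ((hprefix n).prodMk (hX.measurable n)) (measurableSet_singleton _), hwv,
    hX.2, ← Set.singleton_prod_singleton, Measure.prod_prod,
    Measure.map_apply (hprefix n) (measurableSet_singleton _), hw, hX.2,
    PMF.toMeasure_apply_singleton _ _ (measurableSet_singleton _), PMF.uniformOfFintype_apply,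
    pow_succ]

variable [MeasurableSpace V] [DiscreteMeasurableSpace V] [MeasurableSpace σ]

theorem IsUniformIID.measurable_state (hX : IsUniformIID μ X) (hS₀ : ∀ ω, S 0 ω = s₀)
    (hS : ∀ n ω, S (n + 1) ω = step (X n ω) (S n ω)) (n : ℕ) : Measurable (S n) := by
  obtain ⟨T, hT⟩ := exists_eq_apply_prefix hS₀ hS n
  rw [funext hT]
  exact (Measurable.of_discrete (f := T)).comp (measurable_pi_lambda _ fun i ↦ hX.measurable i)

theorem IsUniformIID.map_state_prodMk [Nonempty V] [SFinite μ] (hX : IsUniformIID μ X)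
    (hS₀ : ∀ ω, S 0 ω = s₀) (hS : ∀ n ω, S (n + 1) ω = step (X n ω) (S n ω)) (n : ℕ) :
    μ.map (fun ω ↦ (S n ω, X n ω)) =
      (μ.map (S n)).prod (PMF.uniformOfFintype V).toMeasure := by
  obtain ⟨T, hT⟩ := exists_eq_apply_prefix hS₀ hS n
  have hTm : Measurable T := .of_discrete
  have hprefix : Measurable fun ω (i : Fin n) ↦ X i ω :=
    measurable_pi_lambda _ fun i ↦ hX.measurable i
  calc μ.map (fun ω ↦ (S n ω, X n ω))
      = (μ.map fun ω ↦ (fun i : Fin n ↦ X i ω, X n ω)).map (Prod.map T id) := by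
        rw [Measure.map_map (hTm.prodMap measurable_id) (hprefix.prodMk (hX.measurable n))]
        simp only [hT, Function.comp_def, Prod.map_apply, id_eq]
    _ = (μ.map (S n)).prod (PMF.uniformOfFintype V).toMeasure := by
        rw [hX.map_prefix_prodMk, ← Measure.map_prod_map _ _ hTm measurable_id, Measure.map_id,
          Measure.map_map hTm hprefix, funext hT]
        rfl

theorem hasSubgaussianMGF_sub_of_sum_eq [Nonempty V] {f : V → ℝ} {a l u : ℝ}
    (hsum : ∑ v, f v = Fintype.card V * a) (hf : ∀ v, f v ∈ Set.Icc l u) :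
    HasSubgaussianMGF (fun v ↦ f v - a) ((‖u - l‖₊ / 2) ^ 2)
      (PMF.uniformOfFintype V).toMeasure := by
  have hmean : ∫ v, f v ∂(PMF.uniformOfFintype V).toMeasure = a := by
    simp only [PMF.integral_eq_sum, PMF.uniformOfFintype_apply, ENNReal.toReal_inv,
      ENNReal.toReal_natCast, smul_eq_mul]
    rw [← Finset.mul_sum, hsum, inv_mul_cancel_left₀ (by simp)]
  simpa only [hmean] using
    hasSubgaussianMGF_of_mem_Icc (μ := (PMF.uniformOfFintype V).toMeasure)
      Measurable.of_discrete.aemeasurable (ae_of_all _ hf)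

end UniformIID

section Drift

variable {V Ω σ : Type*} [Fintype V] [Countable σ] [MeasurableSpace Ω] {μ : Measure Ω}
  [IsProbabilityMeasure μ] {X : ℕ → Ω → V} {step : V → σ → σ} {S : ℕ → Ω → σ} {s₀ : σ}
  {Φ : σ → ℝ} {a l u : ℝ}

theorem IsUniformIID.hasSubgaussianMGF_of_drift (hX : IsUniformIID μ X) (hS₀ : ∀ ω, S 0 ω = s₀)
    (hS : ∀ n ω, S (n + 1) ω = step (X n ω) (S n ω))
    (hdrift : ∀ s, ∑ v, (Φ (step v s) - Φ s) = Fintype.card V * a)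
    (hbdd : ∀ v s, Φ (step v s) - Φ s ∈ Set.Icc l u) (n : ℕ) :
    HasSubgaussianMGF (fun ω ↦ Φ (S n ω) - Φ s₀ - n * a) (n * (‖u - l‖₊ / 2) ^ 2) μ := by
  have : Nonempty V := (nonempty_of_isProbabilityMeasure μ).map (X 0)
  let _ : MeasurableSpace V := ⊤
  let _ : MeasurableSpace σ := ⊤
  have : DiscreteMeasurableSpace V := ⟨fun _ ↦ trivial⟩
  have : DiscreteMeasurableSpace σ := ⟨fun _ ↦ trivial⟩
  have hSm := hX.measurable_state hS₀ hS
  induction n with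
  | zero => simp [hS₀]
  | succ n ih =>
    let Y : σ → ℝ := fun s ↦ Φ s - Φ s₀ - n * a
    let Z : σ → V → ℝ := fun s v ↦ Φ (step v s) - Φ s - a
    have hY : HasSubgaussianMGF Y (n * (‖u - l‖₊ / 2) ^ 2) (μ.map (S n)) :=
      (hasSubgaussianMGF_map_iff (hSm n) .of_discrete).2 ih
    have hYZ := hasSubgaussianMGF_prod_add (Z := Z) .of_discrete hY
      fun s ↦ hasSubgaussianMGF_sub_of_sum_eq (hdrift s) (hbdd · s)
    rw [← hX.map_state_prodMk hS₀ hS,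
      hasSubgaussianMGF_map_iff ((hSm n).prodMk (hX.measurable n)) .of_discrete] at hYZ
    convert! hYZ using 1
    · ext ω
      simp only [Y, Z, hS, Function.comp_apply]
      push_cast
      ring
    · push_cast
      ring

theorem IsUniformIID.ae_tendsto_div_of_drift (hX : IsUniformIID μ X) (hS₀ : ∀ ω, S 0 ω = s₀)
    (hS : ∀ n ω, S (n + 1) ω = step (X n ω) (S n ω))
    (hdrift : ∀ s, ∑ v, (Φ (step v s) - Φ s) = Fintype.card V * a)
    (hbdd : ∀ v s, Φ (step v s) - Φ s ∈ Set.Icc l u) :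
    ∀ᵐ ω ∂μ, Tendsto (fun n : ℕ ↦ Φ (S n ω) / n) atTop (𝓝 a) := by
  filter_upwards [ae_tendsto_div_of_hasSubgaussianMGF
    (hX.hasSubgaussianMGF_of_drift hS₀ hS hdrift hbdd)] with ω hω
  have hlim := (hω.add (tendsto_const_div_atTop_nhds_zero_nat (Φ s₀))).add_const a
  rw [zero_add, zero_add] at hlim
  refine hlim.congr' ?_
  filter_upwards [eventually_ne_atTop 0] with n hn
  field_simp
  ring

theorem IsUniformIID.ae_tendsto_count_div (hX : IsUniformIID μ X) (v : V) :
    ∀ᵐ ω ∂μ, Tendsto (fun n : ℕ ↦ (Nat.count (X · ω = v) n : ℝ) / n) atTop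
      (𝓝 (Fintype.card V : ℝ)⁻¹) := by
  have : Nonempty V := ⟨v⟩
  refine hX.ae_tendsto_div_of_drift (S := fun n ω ↦ Nat.count (X · ω = v) n)
    (step := fun w k ↦ k + if w = v then 1 else 0) (Φ := fun k ↦ (k : ℝ)) (l := 0) (u := 1)
    (fun ω ↦ Nat.count_zero _) (fun n ω ↦ Nat.count_succ _ n) (fun k ↦ ?_) fun w k ↦ ?_
  · simp
  · by_cases h : w = v <;> simp [h]

end Drift

section Deposition

variable {V : Type*} [Fintype V] {G : SimpleGraph V} {S : Finset V} {h : V → ℕ} {u v y : V}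

/-- The closed neighbourhood `[v]` of a vertex, as a `Finset`. -/
noncomputable def closedNbhd (G : SimpleGraph V) (v : V) : Finset V :=
  Finset.univ.filter fun y ↦ y = v ∨ G.Adj v y

/-- One step of ballistic deposition: the height profile obtained from `h` when `v` is chosen. -/
noncomputable def deposit (G : SimpleGraph V) (v : V) (h : V → ℕ) : V → ℕ :=
  Function.update h v ((closedNbhd G v).sup h + 1)

theorem mem_closedNbhd : y ∈ closedNbhd G v ↔ y = v ∨ G.Adj v y := by
  simp [closedNbhd]

theorem self_mem_closedNbhd : v ∈ closedNbhd G v :=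
  mem_closedNbhd.2 (.inl rfl)

theorem heightProcess_succ (G : SimpleGraph V) (h₀ : V → ℕ) (x : ℕ → V) (n : ℕ) :
    heightProcess G h₀ x (n + 1) = deposit G (x n) (heightProcess G h₀ x n) := by
  ext y
  rcases eq_or_ne y (x n) with rfl | hy
  · simp [heightProcess, deposit, closedNbhd, Finset.sup_ite, add_comm]
  · simp [heightProcess, deposit, hy]

theorem sup_deposit_of_notMem (hv : v ∉ S) : S.sup (deposit G v h) = S.sup h :=
  Finset.sup_congr rfl fun _ hy ↦ Function.update_of_ne (ne_of_mem_of_not_mem hy hv) _ _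

theorem sup_deposit_of_mem (hv : v ∈ S) (hS : S ⊆ closedNbhd G v) :
    S.sup (deposit G v h) = (closedNbhd G v).sup h + 1 := by
  refine le_antisymm (Finset.sup_le fun y hy ↦ ?_) ?_
  · rcases eq_or_ne y v with rfl | hyv
    · simp [deposit]
    · simpa [deposit, hyv] using (Finset.le_sup (f := h) (hS hy)).trans (Nat.le_succ _)
  · simpa [deposit] using Finset.le_sup (f := deposit G v h) hv

theorem lt_deposit_self (hy : y ∈ closedNbhd G v) : h y < deposit G v h v := by
  simpa [deposit, Nat.lt_succ_iff] using Finset.le_sup (f := h) hy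

theorem le_deposit : h ≤ deposit G v h := by
  intro y
  rcases eq_or_ne y v with rfl | hy
  · exact (lt_deposit_self self_mem_closedNbhd).le
  · simp [deposit, hy]

theorem sup_deposit_le : Finset.univ.sup (deposit G v h) ≤ Finset.univ.sup h + 1 := by
  refine Finset.sup_le fun y _ ↦ ?_
  rcases eq_or_ne y v with rfl | hy
  · simpa [deposit] using Finset.sup_mono (f := h) (Finset.subset_univ _)
  · simpa [deposit, hy] using (Finset.le_sup (f := h) (Finset.mem_univ y)).trans (Nat.le_succ _)

theorem monotone_heightProcess (G : SimpleGraph V) (h₀ : V → ℕ) (x : ℕ → V) :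
    Monotone (heightProcess G h₀ x) :=
  monotone_nat_of_le_succ fun n ↦ heightProcess_succ G h₀ x n ▸ le_deposit

theorem heightProcess_le_of_mem_closedNbhd {h₀ : V → ℕ} {x : ℕ → V} {m n : ℕ}
    (hu : u ∈ closedNbhd G (x m)) (hmn : m < n) :
    heightProcess G h₀ x m u ≤ heightProcess G h₀ x n (x m) :=
  calc heightProcess G h₀ x m u
      ≤ heightProcess G h₀ x (m + 1) (x m) := by
        rw [heightProcess_succ]
        exact (lt_deposit_self hu).le
    _ ≤ heightProcess G h₀ x n (x m) := monotone_heightProcess G h₀ x hmn _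

theorem ciSup_natCast_eq_sup [Nonempty V] (h : V → ℕ) :
    ⨆ v, (h v : ℝ) = (Finset.univ.sup h : ℕ) := by
  refine le_antisymm (ciSup_le fun v ↦ ?_) ?_
  · exact_mod_cast Finset.le_sup (Finset.mem_univ v)
  · obtain ⟨v, -, hv⟩ := Finset.exists_mem_eq_sup _ Finset.univ_nonempty h
    rw [hv]
    exact le_ciSup (f := fun v ↦ (h v : ℝ)) (Set.finite_range _).bddAbove v

end Deposition

section Propagation

theorem tendsto_comp_ceil_mul_div {f : ℕ → ℝ} {g r : ℝ}
    (hf : Tendsto (fun n : ℕ ↦ f n / n) atTop (𝓝 g)) (hr : 0 < r) :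
    Tendsto (fun n : ℕ ↦ f ⌈r * n⌉₊ / n) atTop (𝓝 (g * r)) := by
  have hlim := (hf.comp (tendsto_nat_ceil_atTop.comp
    (tendsto_natCast_atTop_atTop.const_mul_atTop hr))).mul
    ((tendsto_nat_ceil_mul_div_atTop hr.le).comp tendsto_natCast_atTop_atTop)
  refine hlim.congr' ?_
  filter_upwards [eventually_gt_atTop 0] with n hn
  have : (⌈r * n⌉₊ : ℝ) ≠ 0 := by positivity
  simp only [Function.comp_apply]
  field_simp

theorem eventually_exists_mem_Ico_of_tendsto_count_div {p : ℕ → Prop} {c r : ℝ} (hc : 0 < c)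
    (hp : Tendsto (fun n : ℕ ↦ (Nat.count p n : ℝ) / n) atTop (𝓝 c))
    (hr : r ∈ Set.Ioo (0 : ℝ) 1) :
    ∀ᶠ n : ℕ in atTop, ∃ m : ℕ, r * n ≤ m ∧ m < n ∧ p m := by
  filter_upwards [(tendsto_comp_ceil_mul_div hp hr.1).eventually_lt hp
    (mul_lt_of_lt_one_right hc hr.2), eventually_gt_atTop 0] with n hn hn₀
  have hlt : Nat.count p ⌈r * n⌉₊ < Nat.count p n := by
    exact_mod_cast (div_lt_div_iff_of_pos_right (Nat.cast_pos.2 hn₀)).1 hn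
  obtain ⟨m, ⟨hm, hmn⟩, hpm⟩ := Nat.exists_of_count_lt_count hlt
  exact ⟨m, Nat.ceil_le.1 hm, hmn, hpm⟩

variable {V : Type*} [Fintype V] {G : SimpleGraph V} {h₀ : V → ℕ} {x : ℕ → V} {c : V → ℝ} {g : ℝ}

theorem eventually_exists_heightProcess_le_of_reachable (hc : ∀ v, 0 < c v)
    (hx : ∀ v, Tendsto (fun n : ℕ ↦ (Nat.count (x · = v) n : ℝ) / n) atTop (𝓝 (c v)))
    {u v : V} (huv : G.Reachable u v) {r : ℝ} (hr : r ∈ Set.Ioo (0 : ℝ) 1) :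
    ∀ᶠ n : ℕ in atTop, ∃ m : ℕ, r * n ≤ m ∧
      heightProcess G h₀ x m u ≤ heightProcess G h₀ x n v := by
  rw [SimpleGraph.reachable_iff_reflTransGen] at huv
  induction huv generalizing r with
  | refl => exact .of_forall fun n ↦ ⟨n, mul_le_of_le_one_left n.cast_nonneg hr.2.le, le_rfl⟩
  | @tail w v _ hwv ih =>
    have hs : √r ∈ Set.Ioo (0 : ℝ) 1 :=
      ⟨Real.sqrt_pos.2 hr.1, (Real.sqrt_lt' one_pos).2 (by simpa using hr.2)⟩
    have hlarge : Tendsto (fun n : ℕ ↦ ⌈√r * n⌉₊) atTop atTop :=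
      tendsto_nat_ceil_atTop.comp (tendsto_natCast_atTop_atTop.const_mul_atTop hs.1)
    filter_upwards [hlarge.eventually (eventually_forall_ge_atTop.2 (ih hs)),
      eventually_exists_mem_Ico_of_tendsto_count_div (hc v) (hx v) hs] with n hn ⟨k, hk, hkn, hkv⟩
    obtain ⟨m, hm, hle⟩ := hn k (Nat.ceil_le.2 hk)
    refine ⟨m, ?_, ?_⟩
    · calc r * n = √r * (√r * n) := by rw [← mul_assoc, Real.mul_self_sqrt hr.1.le]
        _ ≤ √r * k := by gcongr
        _ ≤ m := hm
    · subst hkv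
      exact hle.trans
        (heightProcess_le_of_mem_closedNbhd (mem_closedNbhd.2 (.inr hwv.symm)) hkn)

theorem tendsto_heightProcess_div_of_tendsto_sup_div (hG : G.Connected) (hc : ∀ v, 0 < c v)
    (hx : ∀ v, Tendsto (fun n : ℕ ↦ (Nat.count (x · = v) n : ℝ) / n) atTop (𝓝 (c v)))
    (hsup : Tendsto (fun n : ℕ ↦ ((Finset.univ.sup (heightProcess G h₀ x n) : ℕ) : ℝ) / n) atTop
      (𝓝 g))
    (v : V) : Tendsto (fun n : ℕ ↦ (heightProcess G h₀ x n v : ℝ) / n) atTop (𝓝 g) := by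
  have := hG.nonempty
  refine tendsto_order.2 ⟨fun a ha ↦ ?_, fun b hb ↦ ?_⟩
  · obtain ⟨r, har, hr⟩ : ∃ r, a < g * r ∧ r ∈ Set.Ioo (0 : ℝ) 1 := by
      have hlim : Tendsto (fun r : ℝ ↦ g * r) (𝓝[<] 1) (𝓝 g) := by
        simpa using ((tendsto_id (α := ℝ) (x := 𝓝 1)).const_mul g).mono_left nhdsWithin_le_nhds
      exact ((hlim.eventually_const_lt ha).and (Ioo_mem_nhdsLT one_pos)).exists
    filter_upwards [(tendsto_comp_ceil_mul_div hsup hr.1).eventually_const_lt har,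
      eventually_all.2 fun u ↦ eventually_exists_heightProcess_le_of_reachable (h₀ := h₀) hc hx
        (hG.preconnected u v) hr] with n hn hprop
    obtain ⟨u, -, hu⟩ := Finset.exists_mem_eq_sup _ Finset.univ_nonempty
      (heightProcess G h₀ x ⌈r * n⌉₊)
    obtain ⟨m, hm, hle⟩ := hprop u
    have hmono := monotone_heightProcess G h₀ x (Nat.ceil_le.2 hm) u
    refine hn.trans_le ?_
    rw [hu]
    gcongr
    exact hmono.trans hle
  · filter_upwards [hsup.eventually_lt_const hb] with n hn
    refine lt_of_le_of_lt ?_ hn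
    gcongr
    exact Finset.le_sup (Finset.mem_univ v)

theorem tendsto_ciInf_of_finite {α β ι : Type*} [Finite ι] [Nonempty ι] [TopologicalSpace β]
    [ConditionallyCompleteLinearOrder β] [ContinuousInf β] {l : Filter α} {f : α → ι → β}
    {b : ι → β} (hf : ∀ i, Tendsto (f · i) l (𝓝 (b i))) :
    Tendsto (fun a ↦ ⨅ i, f a i) l (𝓝 (⨅ i, b i)) := by
  have := Fintype.ofFinite ι
  simpa only [Finset.inf'_univ_eq_ciInf] using
    Tendsto.finset_inf'_nhds_apply Finset.univ_nonempty fun i _ ↦ hf i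

end Propagation

section Potential

variable {V : Type*} [Fintype V] {G : SimpleGraph V} {Φ : (V → ℕ) → ℝ} {C γ : ℝ}

theorem potential_deposit_sub_mem_Icc (hΦ : ∀ h, |Φ h - (Finset.univ.sup h : ℕ)| ≤ C) (v : V)
    (h : V → ℕ) : Φ (deposit G v h) - Φ h ∈ Set.Icc (-(2 * C)) (2 * C + 1) := by
  have hlow : ((Finset.univ.sup h : ℕ) : ℝ) ≤ (Finset.univ.sup (deposit G v h) : ℕ) := by
    exact_mod_cast Finset.sup_mono_fun fun y _ ↦ le_deposit y
  have hupp : ((Finset.univ.sup (deposit G v h) : ℕ) : ℝ) ≤ (Finset.univ.sup h : ℕ) + 1 := by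
    exact_mod_cast sup_deposit_le
  have h₁ := abs_le.1 (hΦ h)
  have h₂ := abs_le.1 (hΦ (deposit G v h))
  constructor <;> linarith

theorem ae_tendsto_sup_div_of_potential {Ω : Type*} [MeasurableSpace Ω] {μ : Measure Ω}
    [IsProbabilityMeasure μ] {X : ℕ → Ω → V} (hX : IsUniformIID μ X)
    (hΦ : ∀ h, |Φ h - (Finset.univ.sup h : ℕ)| ≤ C)
    (hdrift : ∀ h, ∑ v, (Φ (deposit G v h) - Φ h) = γ) (h₀ : V → ℕ) :
    ∀ᵐ ω ∂μ, Tendsto (fun n : ℕ ↦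
      ((Finset.univ.sup (heightProcess G h₀ (X · ω) n) : ℕ) : ℝ) / n) atTop
      (𝓝 (γ / Fintype.card V)) := by
  have : Nonempty V := (nonempty_of_isProbabilityMeasure μ).map (X 0)
  have hcard (h : V → ℕ) : ∑ v, (Φ (deposit G v h) - Φ h) =
      Fintype.card V * (γ / Fintype.card V) := by
    rw [hdrift, mul_div_cancel₀]
    simp
  filter_upwards [hX.ae_tendsto_div_of_drift (S := fun n ω ↦ heightProcess G h₀ (X · ω) n)
    (fun _ ↦ rfl) (fun n ω ↦ heightProcess_succ G h₀ (X · ω) n) hcard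
    (potential_deposit_sub_mem_Icc hΦ)] with ω hω
  have herr : Tendsto (fun n : ℕ ↦ (Φ (heightProcess G h₀ (X · ω) n) -
      (Finset.univ.sup (heightProcess G h₀ (X · ω) n) : ℕ)) / n) atTop (𝓝 0) :=
    squeeze_zero_norm (fun n ↦ by
      rw [norm_div, Real.norm_natCast, Real.norm_eq_abs]
      gcongr
      exact hΦ _) (tendsto_const_div_atTop_nhds_zero_nat C)
  simpa only [← sub_div, sub_sub_cancel, sub_zero] using hω.sub herr

theorem isGrowthRate_of_potential (hG : G.Connected) (hγ : 0 < γ)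
    (hΦ : ∀ h, |Φ h - (Finset.univ.sup h : ℕ)| ≤ C)
    (hdrift : ∀ h, ∑ v, (Φ (deposit G v h) - Φ h) = γ) : IsGrowthRate G γ := by
  have := hG.nonempty
  refine ⟨hγ, fun {Ω} _ μ _ X hX ↦ ?_⟩
  have hmax := ae_tendsto_sup_div_of_potential hX hΦ hdrift fun _ ↦ 0
  have hcount := ae_all_iff.2 hX.ae_tendsto_count_div
  have hscale {f : ℕ → ℝ} (hf : Tendsto (fun n : ℕ ↦ f n / n) atTop (𝓝 (γ / Fintype.card V))) :
      Tendsto (fun n : ℕ ↦ (Fintype.card V : ℝ) * f n / n) atTop (𝓝 γ) := by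
    have hlim := hf.const_mul (Fintype.card V : ℝ)
    rw [mul_div_cancel₀ γ (by simp)] at hlim
    simpa only [mul_div_assoc] using hlim
  constructor
  · filter_upwards [hmax] with ω hω
    simp only [ciSup_natCast_eq_sup]
    exact hscale hω
  · filter_upwards [hmax, hcount] with ω hω hωc
    have hlim := tendsto_heightProcess_div_of_tendsto_sup_div hG
      (fun _ ↦ inv_pos.2 (Nat.cast_pos.2 Fintype.card_pos)) hωc hω
    refine hscale ?_
    simpa only [div_eq_mul_inv, ciInf_const,
      Real.iInf_mul_of_nonneg (inv_nonneg.2 (Nat.cast_nonneg _))] using tendsto_ciInf_of_finite hlim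

end Potential

section Butterfly

theorem butterfly_connected : butterfly.Connected := by
  have hcenter (v : Fin 5) : butterfly.Reachable 0 v := by
    rcases eq_or_ne 0 v with rfl | hv
    · rfl
    · exact SimpleGraph.Adj.reachable (by simp [butterfly, hv])
  exact ⟨fun u v ↦ (hcenter u).symm.trans (hcenter v)⟩

theorem closedNbhd_butterfly_zero : closedNbhd butterfly 0 = Finset.univ := by
  ext y
  simp [mem_closedNbhd, butterfly, eq_comm, em]

theorem closedNbhd_butterfly_of_left {v : Fin 5} (hv : v = 1 ∨ v = 2) :
    closedNbhd butterfly v = {0, 1, 2} := by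
  ext y
  rcases hv with rfl | rfl <;> fin_cases y <;> simp [mem_closedNbhd, butterfly]

theorem closedNbhd_butterfly_of_right {v : Fin 5} (hv : v = 3 ∨ v = 4) :
    closedNbhd butterfly v = {0, 3, 4} := by
  ext y
  rcases hv with rfl | rfl <;> fin_cases y <;> simp [mem_closedNbhd, butterfly]

theorem sup_univ_fin_five (h : Fin 5 → ℕ) :
    Finset.univ.sup h = max (Finset.sup {0, 1, 2} h) (Finset.sup {0, 3, 4} h) := by
  rw [← Finset.sup_union]
  congr 1
  ext v
  fin_cases v <;> simp

/-- The maximum of the heights `p`, `q` of the two triangles, corrected by the solution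
`d ↦ 2/3 * 2⁻ᵈ` of the Poisson equation of the Markov chain `|p - q|`; the correction turns the
drift of the maximum into a constant. -/
noncomputable def gapPotential (p q : ℕ) : ℝ :=
  max p q + 2 / 3 * (1 / 2) ^ Nat.dist p q

theorem gapPotential_comm (p q : ℕ) : gapPotential p q = gapPotential q p := by
  rw [gapPotential, gapPotential, max_comm, Nat.dist_comm]

theorem gapPotential_self (p : ℕ) : gapPotential p p = p + 2 / 3 := by
  simp [gapPotential]

theorem gapPotential_add (p k : ℕ) : gapPotential p (p + k) = p + k + 2 / 3 * (1 / 2) ^ k := by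
  simp [gapPotential, Nat.dist]

theorem abs_gapPotential_sub_max_le (p q : ℕ) : |gapPotential p q - (max p q : ℕ)| ≤ 2 / 3 := by
  have hpow : (1 / 2 : ℝ) ^ Nat.dist p q ≤ 1 := pow_le_one₀ (by norm_num) (by norm_num)
  rw [gapPotential, Nat.cast_max, add_sub_cancel_left, abs_of_nonneg (by positivity)]
  linarith

theorem gapPotential_drift (p q : ℕ) :
    gapPotential (max p q + 1) (max p q + 1) + 2 * gapPotential (p + 1) q +
      2 * gapPotential p (q + 1) = 5 * gapPotential p q + 11 / 3 := by
  wlog hpq : p ≤ q generalizing p q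
  · have := this q p (le_of_not_ge hpq)
    rw [max_comm, gapPotential_comm (q + 1), gapPotential_comm q, gapPotential_comm q p] at this
    linarith
  obtain ⟨k, rfl⟩ := Nat.exists_eq_add_of_le hpq
  rw [max_eq_right hpq, gapPotential_self, add_assoc p k 1, gapPotential_add, gapPotential_add]
  cases k with
  | zero =>
    rw [add_zero, gapPotential_comm, gapPotential_add]
    push_cast
    ring
  | succ k =>
    rw [show p + (k + 1) = p + 1 + k by ring, gapPotential_add]
    push_cast
    ring

/-- The potential of a height profile on the butterfly graph whose drift is `11 / 3`. -/
noncomputable def butterflyPotential (h : Fin 5 → ℕ) : ℝ :=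
  gapPotential (Finset.sup {0, 1, 2} h) (Finset.sup {0, 3, 4} h)

theorem abs_butterflyPotential_sub_sup_le (h : Fin 5 → ℕ) :
    |butterflyPotential h - (Finset.univ.sup h : ℕ)| ≤ 2 / 3 := by
  rw [sup_univ_fin_five]
  exact abs_gapPotential_sub_max_le _ _

theorem butterflyPotential_deposit_zero (h : Fin 5 → ℕ) :
    butterflyPotential (deposit butterfly 0 h) =
      gapPotential (max (Finset.sup {0, 1, 2} h) (Finset.sup {0, 3, 4} h) + 1)
        (max (Finset.sup {0, 1, 2} h) (Finset.sup {0, 3, 4} h) + 1) := by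
  have hsub (S : Finset (Fin 5)) : S ⊆ closedNbhd butterfly 0 :=
    closedNbhd_butterfly_zero ▸ S.subset_univ
  rw [butterflyPotential, sup_deposit_of_mem (by simp) (hsub _),
    sup_deposit_of_mem (by simp) (hsub _), closedNbhd_butterfly_zero, sup_univ_fin_five]

theorem butterflyPotential_deposit_of_left {v : Fin 5} (hv : v = 1 ∨ v = 2) (h : Fin 5 → ℕ) :
    butterflyPotential (deposit butterfly v h) =
      gapPotential (Finset.sup {0, 1, 2} h + 1) (Finset.sup {0, 3, 4} h) := by
  have hnbhd := closedNbhd_butterfly_of_left hv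
  rw [butterflyPotential, sup_deposit_of_mem (hnbhd ▸ self_mem_closedNbhd) hnbhd.ge,
    sup_deposit_of_notMem (by rcases hv with rfl | rfl <;> simp), hnbhd]

theorem butterflyPotential_deposit_of_right {v : Fin 5} (hv : v = 3 ∨ v = 4) (h : Fin 5 → ℕ) :
    butterflyPotential (deposit butterfly v h) =
      gapPotential (Finset.sup {0, 1, 2} h) (Finset.sup {0, 3, 4} h + 1) := by
  have hnbhd := closedNbhd_butterfly_of_right hv
  rw [butterflyPotential, sup_deposit_of_notMem (by rcases hv with rfl | rfl <;> simp),
    sup_deposit_of_mem (hnbhd ▸ self_mem_closedNbhd) hnbhd.ge, hnbhd]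

theorem sum_butterflyPotential_deposit_sub (h : Fin 5 → ℕ) :
    ∑ v, (butterflyPotential (deposit butterfly v h) - butterflyPotential h) = 11 / 3 := by
  have hdrift := gapPotential_drift (Finset.sup {0, 1, 2} h) (Finset.sup {0, 3, 4} h)
  rw [Fin.sum_univ_five, butterflyPotential_deposit_zero,
    butterflyPotential_deposit_of_left (.inl rfl), butterflyPotential_deposit_of_left (.inr rfl),
    butterflyPotential_deposit_of_right (.inl rfl), butterflyPotential_deposit_of_right (.inr rfl),
    butterflyPotential]
  linarith

end Butterfly

theorem stmt4 : IsGrowthRate butterfly (11 / 3) :=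
  isGrowthRate_of_potential butterfly_connected (by norm_num) abs_butterflyPotential_sub_sup_le
    sum_butterflyPotential_deposit_sub
end

section
/- For every n ≥ 3, the star graph S_n has growth rate γ(S_n) = 1 + (1/n) · Σ_{k=1}^∞ a_{n−1,k} / n^k. (Formula (5).) -/
open MeasureTheory Filter Topology
open scoped ENNReal Classical

/-- `a n k = Σ_{r_1+⋯+r_n = k} (k! / (r_1! ⋯ r_n!)) · max_j r_j`. -/
def a (n k : ℕ) : ℕ :=
  ∑ r ∈ Finset.Nat.antidiagonalTuple n k,
    Nat.multinomial Finset.univ r * Finset.univ.sup r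

/-- The star graph `S n` on `n` vertices `0, 1, …, n−1`, with edges `{0, i}` for `1 ≤ i ≤ n−1`. -/
def starGraph (n : ℕ) : SimpleGraph (Fin n) :=
  SimpleGraph.fromRel fun i _ => (i : ℕ) = 0

/-
By the law of large numbers the driving sequence is almost surely normal: every word of length `l`
has density `n⁻¹ ^ l` in it. For a normal driving sequence everything is deterministic. A visit to
the centre `c` lifts it to one above the maximal height. Until the next visit, the first choice of a
leaf puts that leaf one above `c` and each further choice lifts it by one, so the maximal height
exceeds that of `c` by the largest letter count of the word of leaves chosen since. Hence the
increment of the maximal height at any time is a function of the word read since the last visit to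
`c`, and averaging over these words gives the series. Finally, whenever a vertex `v` is chosen right
after `c`, it catches up with the maximal height; as the word `c v` has positive density, all
heights grow at the same rate.
-/

open scoped Finset

section Averages

/-- The Cesàro averages of `f` converge to `p`. -/
def HasAverage (f : ℕ → ℝ) (p : ℝ) : Prop :=
  Tendsto (fun N : ℕ => (∑ k ∈ Finset.range N, f k) / N) atTop (𝓝 p)

namespace HasAverage

variable {f g : ℕ → ℝ} {p q : ℝ}

lemma sub (hf : HasAverage f p) (hg : HasAverage g q) :
    HasAverage (fun k => f k - g k) (p - q) := by
  refine (Tendsto.sub hf hg).congr fun N => ?_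
  rw [Finset.sum_sub_distrib, sub_div]

lemma const_mul (hf : HasAverage f p) (C : ℝ) : HasAverage (fun k => C * f k) (C * p) := by
  refine (Tendsto.const_mul C hf).congr fun N => ?_
  rw [← Finset.mul_sum, mul_div_assoc]

lemma sum {ι : Type*} (s : Finset ι) {f : ι → ℕ → ℝ} {p : ι → ℝ}
    (h : ∀ i ∈ s, HasAverage (f i) (p i)) :
    HasAverage (fun k => ∑ i ∈ s, f i k) (∑ i ∈ s, p i) := by
  refine (tendsto_finsetSum s h).congr fun N => ?_
  rw [Finset.sum_comm, Finset.sum_div]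

lemma const (C : ℝ) : HasAverage (fun _ => C) C := by
  refine tendsto_const_nhds.congr' ?_
  filter_upwards [eventually_gt_atTop 0] with N hN
  rw [Finset.sum_const, Finset.card_range, nsmul_eq_mul, mul_div_cancel_left₀]
  exact_mod_cast hN.ne'

lemma of_shift (c : ℕ) (h : HasAverage (fun k => f (k + c)) p) : HasAverage f p := by
  have shifted : Tendsto (fun N : ℕ => (∑ k ∈ Finset.range c, f k) / ((N + c : ℕ) : ℝ) +
      (∑ k ∈ Finset.range N, f (k + c)) / N * (N / ((N + c : ℕ) : ℝ))) atTop (𝓝 (0 + p * 1)) := by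
    refine Tendsto.add ?_ (Tendsto.mul h ?_)
    · exact tendsto_const_nhds.div_atTop
        (tendsto_natCast_atTop_atTop.comp (tendsto_add_atTop_nat c))
    · simpa only [Nat.cast_add] using tendsto_natCast_div_add_atTop (c : ℝ)
  rw [zero_add, mul_one] at shifted
  refine (tendsto_add_atTop_iff_nat c).mp (shifted.congr' ?_)
  filter_upwards [eventually_gt_atTop 0] with N hN
  have hN' : (N : ℝ) ≠ 0 := by exact_mod_cast hN.ne'
  rw [div_mul_div_cancel₀ hN', ← add_div, add_comm N c, Finset.sum_range_add]
  simp only [add_comm c]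

lemma of_blocks {f : ℕ → ℝ} (hf : 0 ≤ f) {l : ℕ} (hl : 0 < l) {p : ℝ}
    (h : ∀ r < l, HasAverage (fun j => f (j * l + r)) p) : HasAverage f p := by
  have sum_blocks (M : ℕ) : ∑ k ∈ Finset.range (M * l), f k =
      ∑ r ∈ Finset.range l, ∑ j ∈ Finset.range M, f (j * l + r) := by
    induction M with
    | zero => simp
    | succ M ih =>
      simp only [Nat.succ_mul, Finset.sum_range_add, ih, Finset.sum_range_succ,
        Finset.sum_add_distrib]
  refine tendsto_div_of_monotone_of_exists_subseq_tendsto_div _ p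
    (fun N N' hN => Finset.sum_le_sum_of_subset_of_nonneg (Finset.range_mono hN) fun k _ _ => hf k)
    fun b hb => ⟨fun M => M * l, ?_, tendsto_id.atTop_mul_const' hl, ?_⟩
  · filter_upwards [(tendsto_natCast_atTop_atTop.const_mul_atTop
      (sub_pos.mpr hb)).eventually_ge_atTop 1] with M hM
    push_cast
    rw [← mul_assoc]
    gcongr
    linarith
  · have block_average := (HasAverage.sum (Finset.range l) fun r hr =>
      h r (Finset.mem_range.mp hr)).div_const (l : ℝ)
    have hl' : (l : ℝ) ≠ 0 := by exact_mod_cast hl.ne'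
    rw [Finset.sum_const, Finset.card_range, nsmul_eq_mul,
      mul_div_cancel_left₀ _ hl'] at block_average
    refine block_average.congr fun M => ?_
    rw [sum_blocks, Finset.sum_comm, div_div, Nat.cast_mul]

lemma of_approx {F R : ℕ → ℕ → ℝ} {u r : ℕ → ℝ} (hfF : ∀ L k, |f k - F L k| ≤ R L k)
    (hF : ∀ L, HasAverage (F L) (u L)) (hR : ∀ L, HasAverage (R L) (r L))
    (hu : Tendsto u atTop (𝓝 p)) (hr : Tendsto r atTop (𝓝 0)) : HasAverage f p := by
  have dist_le (L N : ℕ) : dist ((∑ k ∈ Finset.range N, f k) / N)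
      ((∑ k ∈ Finset.range N, F L k) / N) ≤ (∑ k ∈ Finset.range N, R L k) / N := by
    rw [Real.dist_eq, ← sub_div, ← Finset.sum_sub_distrib, abs_div, Nat.abs_cast]
    gcongr
    exact (Finset.abs_sum_le_sum_abs _ _).trans (Finset.sum_le_sum fun k _ => hfF L k)
  refine Metric.tendsto_nhds.mpr fun ε hε => ?_
  obtain ⟨L, hLu, hLr⟩ := ((Metric.tendsto_nhds.mp hu (ε / 3) (by positivity)).and
    (hr.eventually_lt_const (show 0 < ε / 3 by positivity))).exists
  filter_upwards [Metric.tendsto_nhds.mp (hF L) (ε / 3) (by positivity),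
    Tendsto.eventually_lt_const hLr (hR L)] with N hFN hRN
  calc dist ((∑ k ∈ Finset.range N, f k) / N) p
      ≤ dist ((∑ k ∈ Finset.range N, f k) / N) ((∑ k ∈ Finset.range N, F L k) / N)
        + dist ((∑ k ∈ Finset.range N, F L k) / N) (u L) + dist (u L) p := dist_triangle4 _ _ _ _
    _ < ε / 3 + ε / 3 + ε / 3 := by gcongr; exact (dist_le L N).trans_lt hRN
    _ = ε := by ring

end HasAverage

/-- The set `S` of natural numbers has natural density `p`. -/
def HasDensity (S : Set ℕ) (p : ℝ) : Prop := HasAverage (S.indicator 1) p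

lemma HasDensity.eventually_exists_mem {S : Set ℕ} {p b : ℝ} (hS : HasDensity S p) (hp : 0 < p)
    (hb : b < 1) : ∀ᶠ N : ℕ in atTop, ∃ t ∈ S, t < N ∧ b * N ≤ t := by
  wlog hb0 : 0 < b generalizing b
  · filter_upwards [this (b := 1 / 2) (by norm_num) (by norm_num)] with N ⟨t, htS, htN, ht⟩
    exact ⟨t, htS, htN, (mul_le_mul_of_nonneg_right (by linarith) N.cast_nonneg).trans ht⟩
  let M (N : ℕ) : ℕ := ⌈b * N⌉₊
  have M_div : Tendsto (fun N : ℕ => (M N : ℝ) / N) atTop (𝓝 b) :=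
    (tendsto_nat_ceil_mul_div_atTop hb0.le).comp tendsto_natCast_atTop_atTop
  have M_atTop : Tendsto M atTop atTop :=
    tendsto_nat_ceil_atTop.comp (tendsto_natCast_atTop_atTop.const_mul_atTop hb0)
  let c (N : ℕ) : ℝ := ∑ k ∈ Finset.range N, S.indicator 1 k
  have c_M_div : Tendsto (fun N : ℕ => c (M N) / N) atTop (𝓝 (p * b)) := by
    refine (Tendsto.mul (Tendsto.comp hS M_atTop) M_div).congr' ?_
    filter_upwards [M_atTop.eventually_gt_atTop 0] with N hN
    exact div_mul_div_cancel₀ (by exact_mod_cast hN.ne')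
  filter_upwards [c_M_div.eventually_lt hS (mul_lt_of_lt_one_right hp hb),
    eventually_gt_atTop 0] with N hc hN
  have hN' : (0 : ℝ) < N := by exact_mod_cast hN
  have M_le : M N ≤ N := Nat.ceil_le.mpr (mul_le_of_le_one_left hN'.le hb.le)
  have sum_pos : 0 < ∑ k ∈ Finset.Ico (M N) N, S.indicator (1 : ℕ → ℝ) k := by
    rw [Finset.sum_Ico_eq_sub _ M_le]
    exact sub_pos.mpr ((div_lt_div_iff_of_pos_right hN').mp hc)
  obtain ⟨t, ht, htS⟩ := Finset.exists_ne_zero_of_sum_ne_zero sum_pos.ne'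
  obtain ⟨hMt, htN⟩ := Finset.mem_Ico.mp ht
  exact ⟨t, Set.mem_of_indicator_ne_zero htS, htN, (Nat.le_ceil _).trans (by exact_mod_cast hMt)⟩

end Averages

section NormalSequences

variable {V : Type*} {x : ℕ → V}

/-- The positions at which the word `u` occurs in the sequence `x`. -/
def occurrences (x : ℕ → V) {l : ℕ} (u : Fin l → V) : Set ℕ := {k | ∀ i : Fin l, x (k + i) = u i}

/-- The sequence `x` is normal in the sense of Borel: every word of length `l` has the density
`(#V)⁻¹ ^ l` that it would have in an i.i.d. uniform sequence. -/
def IsNormal [Fintype V] (x : ℕ → V) : Prop :=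
  ∀ (l : ℕ) (u : Fin l → V), HasDensity (occurrences x u) ((Fintype.card V : ℝ)⁻¹ ^ l)

lemma eq_of_mem_occurrences {l : ℕ} {u u' : Fin l → V} {k : ℕ} (h : k ∈ occurrences x u)
    (h' : k ∈ occurrences x u') : u = u' :=
  funext fun i => (h i).symm.trans (h' i)

/-- The word over `V` that starts with a visit to `c` and continues with the word `w`, which
avoids `c`. -/
def visitWord (c : V) {s : ℕ} (w : Fin s → {v // v ≠ c}) : Fin (s + 1) → V :=
  Fin.cons c fun i => (w i : V)

lemma visitWord_injective (c : V) (s : ℕ) : Function.Injective (visitWord c (s := s)) :=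
  (Fin.cons_right_injective (α := fun _ => V) c).comp Subtype.val_injective.comp_left

lemma mem_occurrences_visitWord {c : V} {s t : ℕ} {w : Fin s → {v // v ≠ c}} :
    t ∈ occurrences x (visitWord c w) ↔ x t = c ∧ ∀ i : Fin s, x (t + 1 + i) = w i := by
  simp only [occurrences, visitWord, Set.mem_ofPred_eq, Fin.forall_fin_succ, Fin.cons_zero,
    Fin.cons_succ, Fin.val_zero, Fin.val_succ, add_zero, add_assoc, add_comm 1]

/-- The times `k` at which the last visit of `x` to `c` lies exactly `s` steps back. -/
def elapsed (x : ℕ → V) (c : V) (s : ℕ) : Set ℕ :=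
  {k | ∃ t, k = t + s ∧ ∃ w : Fin s → {v // v ≠ c}, t ∈ occurrences x (visitWord c w)}

lemma pairwise_disjoint_elapsed (x : ℕ → V) (c : V) :
    Pairwise (Function.onFun Disjoint (elapsed x c)) := by
  refine (pairwise_disjoint_on _).mpr fun s s' hs => Set.disjoint_left.mpr ?_
  rintro k ⟨t, rfl, w, hw⟩ ⟨t', htt', w', hw'⟩
  refine (w' ⟨t - t' - 1, by omega⟩).2 ?_
  rw [← (mem_occurrences_visitWord.mp hw').2, ← (mem_occurrences_visitWord.mp hw).1]
  exact congrArg x (by dsimp only; omega)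

lemma indicator_elapsed_add [Fintype V] {c : V} {s : ℕ} {g : ℕ → ℝ}
    {φ : (Fin s → {v // v ≠ c}) → ℝ}
    (hφ : ∀ w, ∀ t ∈ occurrences x (visitWord c w), g (t + s) = φ w) (t : ℕ) :
    (elapsed x c s).indicator g (t + s) =
      ∑ w, φ w * (occurrences x (visitWord c w)).indicator 1 t := by
  by_cases ht : ∃ w : Fin s → {v // v ≠ c}, t ∈ occurrences x (visitWord c w)
  · obtain ⟨w, hw⟩ := ht
    have ht : t + s ∈ elapsed x c s := ⟨t, rfl, w, hw⟩
    rw [Set.indicator_of_mem ht, Finset.sum_eq_single w, hφ w t hw,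
      Set.indicator_of_mem hw, Pi.one_apply, mul_one]
    · intro w' _ hne
      rw [Set.indicator_of_notMem fun hw' => hne (visitWord_injective c s
        (eq_of_mem_occurrences hw' hw)), mul_zero]
    · simp
  · rw [Set.indicator_of_notMem, Finset.sum_eq_zero]
    · intro w _
      rw [Set.indicator_of_notMem fun hw => ht ⟨w, hw⟩, mul_zero]
    · rintro ⟨t', htt', hw⟩
      exact ht (Nat.add_right_cancel htt' ▸ hw)

variable [Fintype V]

lemma IsNormal.hasAverage_indicator_elapsed (hx : IsNormal x) {c : V} {s : ℕ} {g : ℕ → ℝ}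
    {φ : (Fin s → {v // v ≠ c}) → ℝ}
    (hφ : ∀ w, ∀ t ∈ occurrences x (visitWord c w), g (t + s) = φ w) :
    HasAverage ((elapsed x c s).indicator g)
      ((∑ w, φ w) * (Fintype.card V : ℝ)⁻¹ ^ (s + 1)) := by
  refine HasAverage.of_shift s ?_
  simp only [indicator_elapsed_add hφ, Finset.sum_mul]
  exact HasAverage.sum _ fun w _ => (hx _ _).const_mul _

lemma card_ne_add_one (c : V) : Fintype.card {v // v ≠ c} + 1 = Fintype.card V := by
  have card_pos : 0 < Fintype.card V := Fintype.card_pos_iff.mpr ⟨c⟩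
  rw [show Fintype.card {v // v ≠ c} = Fintype.card V - 1 from Set.card_ne_eq c]
  exact Nat.sub_add_cancel card_pos

lemma hasSum_elapsed_density (c : V) :
    HasSum (fun s => (∑ _w : Fin s → {v // v ≠ c}, (1 : ℝ)) * (Fintype.card V : ℝ)⁻¹ ^ (s + 1))
      1 := by
  set m := Fintype.card {v // v ≠ c} with hm
  have card_eq : (Fintype.card V : ℝ) = m + 1 := by exact_mod_cast (card_ne_add_one c).symm
  have div_lt_one : (m : ℝ) / (m + 1) < 1 := (div_lt_one (by positivity)).mpr (lt_add_one _)
  convert! (hasSum_geometric_of_lt_one (by positivity) div_lt_one).mul_right ((m : ℝ) + 1)⁻¹ using 1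
  · ext s
    rw [card_eq, Finset.sum_const, Finset.card_univ, Fintype.card_fun, Fintype.card_fin,
      nsmul_eq_mul, mul_one, Nat.cast_pow, ← hm, pow_succ, ← mul_assoc, ← mul_pow, div_eq_mul_inv]
  · field_simp
    ring

/-- The times are sorted by the word read since the last visit to `c`; only a set of small density
has a long word. -/
theorem IsNormal.hasAverage_of_hasSum (hx : IsNormal x) {c : V} {g : ℕ → ℝ} {C p : ℝ}
    (hg : ∀ k, |g k| ≤ C) {φ : ∀ s, (Fin s → {v // v ≠ c}) → ℝ}
    (hφ : ∀ s w, ∀ t ∈ occurrences x (visitWord c w), g (t + s) = φ s w)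
    (hp : HasSum (fun s => (∑ w, φ s w) * (Fintype.card V : ℝ)⁻¹ ^ (s + 1)) p) :
    HasAverage g p := by
  let U (L : ℕ) : Set ℕ := ⋃ s ∈ Finset.range L, elapsed x c s
  have indicator_U (L : ℕ) (f : ℕ → ℝ) :
      (U L).indicator f = fun k => ∑ s ∈ Finset.range L, (elapsed x c s).indicator f k :=
    Finset.indicator_biUnion _ _ ((pairwise_disjoint_elapsed x c).set_pairwise _)
  have hU (L : ℕ) : HasAverage ((U L).indicator 1) (∑ s ∈ Finset.range L,
      (∑ _w : Fin s → {v // v ≠ c}, (1 : ℝ)) * (Fintype.card V : ℝ)⁻¹ ^ (s + 1)) := by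
    rw [indicator_U]
    exact HasAverage.sum _ fun s _ => hx.hasAverage_indicator_elapsed fun _ _ _ => rfl
  have hgU (L : ℕ) : HasAverage ((U L).indicator g) (∑ s ∈ Finset.range L,
      (∑ w, φ s w) * (Fintype.card V : ℝ)⁻¹ ^ (s + 1)) := by
    rw [indicator_U]
    exact HasAverage.sum _ fun s _ => hx.hasAverage_indicator_elapsed (hφ s)
  refine HasAverage.of_approx (fun L k => ?_) hgU
    (fun L => ((HasAverage.const 1).sub (hU L)).const_mul C) hp.tendsto_sum_nat ?_
  · by_cases hk : k ∈ U L
    · simp [hk]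
    · simpa [hk] using hg k
  · simpa using ((hasSum_elapsed_density c).tendsto_sum_nat.const_sub 1).const_mul C

end NormalSequences

section Words

variable {ι : Type*} {s : ℕ}

/-- The number of occurrences of the letter `j` in the word `w`. -/
noncomputable def letterCount (w : Fin s → ι) (j : ι) : ℕ := #{i | w i = j}

lemma sum_letterCount [Fintype ι] (w : Fin s → ι) : ∑ j, letterCount w j = s :=
  (Finset.card_eq_sum_card_fiberwise fun i _ =>
    Finset.mem_coe.mpr (Finset.mem_univ (w i))).symm.trans (Finset.card_fin s)

lemma letterCount_le (w : Fin s → ι) (j : ι) : letterCount w j ≤ s :=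
  (Finset.card_le_univ _).trans_eq (Fintype.card_fin s)

lemma letterCount_comp_of_injective {κ : Type*} {f : ι → κ} (hf : Function.Injective f)
    (w : Fin s → ι) (j : ι) : letterCount (f ∘ w) (f j) = letterCount w j := by
  simp only [letterCount, Function.comp_apply, hf.eq_iff]

lemma letterCount_succ (w : Fin (s + 1) → ι) (j : ι) :
    letterCount w j = letterCount (Fin.init w) j + if w (Fin.last s) = j then 1 else 0 := by
  simp only [letterCount, Finset.card_filter, Fin.sum_univ_castSucc]
  rfl

lemma card_letterCount_eq [Fintype ι] {r : ι → ℕ} (hr : ∑ j, r j = s) :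
    #{w : Fin s → ι | letterCount w = r} = Nat.multinomial Finset.univ r := by
  let d : ι →₀ ℕ := Finsupp.equivFunOnFinite.symm r
  have coeff_prod (w : Fin s → ι) : MvPolynomial.coeff d (∏ i, MvPolynomial.X (w i)) =
      if letterCount w = r then 1 else 0 := by
    have prod_eq : ∏ i, (MvPolynomial.X (w i) : MvPolynomial ι ℕ) =
        MvPolynomial.monomial (∑ i, Finsupp.single (w i) 1) 1 :=
      (MvPolynomial.monomial_sum_one _ _).symm
    have sum_single : ∑ i, Finsupp.single (w i) 1 = d ↔ letterCount w = r := by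
      simp only [DFunLike.ext_iff, funext_iff, Finsupp.finsetSum_apply, Finsupp.single_apply,
        letterCount, Finset.card_filter, d, Finsupp.equivFunOnFinite_symm_apply_apply]
    simp only [prod_eq, MvPolynomial.coeff_monomial, sum_single]
  have sum_d : d.sum (fun _ k => k) = s := by
    rw [Finsupp.sum_fintype _ _ fun _ => rfl]
    exact hr
  calc #{w : Fin s → ι | letterCount w = r}
      = MvPolynomial.coeff d ((∑ j, MvPolynomial.X j) ^ s : MvPolynomial ι ℕ) := by
        simp only [Fintype.sum_pow, MvPolynomial.coeff_sum, coeff_prod, Finset.card_filter]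
    _ = Nat.multinomial Finset.univ r := by
        rw [MvPolynomial.coeff_sum_X_pow_of_fintype, if_pos sum_d, Nat.cast_id,
          Finsupp.multinomial_eq_of_support_subset (Finset.subset_univ _)]
        rfl

variable [Fintype ι]

/-- The number of occurrences of the most frequent letter of the word `w`. -/
noncomputable def maxCount (w : Fin s → ι) : ℕ := Finset.univ.sup (letterCount w)

lemma maxCount_le (w : Fin s → ι) : maxCount w ≤ s :=
  Finset.sup_le fun j _ => letterCount_le w j

lemma maxCount_equiv_comp {κ : Type*} [Fintype κ] (e : ι ≃ κ) (w : Fin s → ι) :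
    maxCount (e ∘ w) = maxCount w := by
  rw [maxCount, ← Finset.univ_map_equiv_to_embedding e, Finset.sup_map]
  exact congrArg Finset.univ.sup (funext (letterCount_comp_of_injective e.injective w))

lemma sum_maxCount (ι : Type*) [Fintype ι] (s : ℕ) :
    ∑ w : Fin s → ι, maxCount w = a (Fintype.card ι) s := by
  have fin_case (m : ℕ) : ∑ w : Fin s → Fin m, maxCount w = a m s := by
    rw [← Finset.sum_fiberwise_of_maps_to (g := letterCount)
      fun w _ => Finset.Nat.mem_antidiagonalTuple.mpr (sum_letterCount w)]
    refine Finset.sum_congr rfl fun r hr => ?_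
    rw [← card_letterCount_eq (Finset.Nat.mem_antidiagonalTuple.mp hr)]
    refine Finset.sum_const_nat fun w hw => ?_
    rw [maxCount, (Finset.mem_filter.mp hw).2]
  rw [← fin_case, ← ((Equiv.refl (Fin s)).arrowCongr (Fintype.equivFin ι)).sum_comp]
  exact Finset.sum_congr rfl fun w _ => (maxCount_equiv_comp (Fintype.equivFin ι) w).symm

lemma sum_comp_init (f : (Fin s → ι) → ℝ) :
    ∑ w : Fin (s + 1) → ι, f (Fin.init w) = Fintype.card ι * ∑ w, f w := by
  rw [← (Fin.snocEquiv fun _ => ι).sum_comp, Fintype.sum_prod_type]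
  simp [Fin.snocEquiv]

/-- The amount by which the last letter of a word raises its maximal letter count. The empty word
stands for a visit to the centre, which raises the maximal height by one. -/
noncomputable def topIncrement : {s : ℕ} → (Fin s → ι) → ℝ
  | 0, _ => 1
  | _ + 1, w => maxCount w - maxCount (Fin.init w)

lemma sum_topIncrement_succ (ι : Type*) [Fintype ι] (s : ℕ) :
    ∑ w : Fin (s + 1) → ι, topIncrement w =
      a (Fintype.card ι) (s + 1) - Fintype.card ι * a (Fintype.card ι) s := by
  simp only [topIncrement, Finset.sum_sub_distrib, ← sum_maxCount, Nat.cast_sum]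
  rw [sum_comp_init fun w : Fin s → ι => (maxCount w : ℝ)]

lemma a_le (m s : ℕ) : a m s ≤ s * m ^ s := by
  have sum_le := Finset.sum_le_card_nsmul Finset.univ maxCount s
    fun (w : Fin s → Fin m) _ => maxCount_le w
  rw [sum_maxCount] at sum_le
  simpa [mul_comm] using sum_le

lemma a_zero_right (m : ℕ) : a m 0 = 0 := by
  simpa using a_le m 0

lemma summable_a_div_pow (m : ℕ) : Summable fun s => (a m s : ℝ) / (m + 1) ^ s := by
  have geometric : Summable fun s : ℕ => (s : ℝ) ^ 1 * (m / (m + 1) : ℝ) ^ s := by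
    refine summable_pow_mul_geometric_of_norm_lt_one 1 ?_
    rw [Real.norm_of_nonneg (by positivity), div_lt_one (by positivity)]
    exact lt_add_one _
  refine Summable.of_nonneg_of_le (fun s => by positivity) (fun s => ?_) geometric
  rw [pow_one, div_pow, ← mul_div_assoc]
  gcongr
  exact_mod_cast a_le m s

/-- The growth rate of the star with `n` vertices. -/
noncomputable def starRate (n : ℕ) : ℝ :=
  1 + 1 / n * ∑' k : ℕ, (a (n - 1) (k + 1) : ℝ) / n ^ (k + 1)

lemma hasSum_topIncrement (ι : Type*) [Fintype ι] {n : ℕ} (hn : Fintype.card ι + 1 = n) :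
    HasSum (fun s => (∑ w : Fin s → ι, topIncrement w) * (n : ℝ)⁻¹ ^ (s + 1))
      ((n : ℝ)⁻¹ * starRate n) := by
  subst hn
  set m := Fintype.card ι with hm
  have cast_eq : ((m + 1 : ℕ) : ℝ) = m + 1 := Nat.cast_succ m
  have succ_ne_zero : (m : ℝ) + 1 ≠ 0 := by positivity
  let b (s : ℕ) : ℝ := a m s / (m + 1) ^ s
  have hasSum_succ : HasSum (fun s => b (s + 1)) (∑' s, b (s + 1)) :=
    ((summable_nat_add_iff 1).mpr (summable_a_div_pow m)).hasSum
  have hasSum_b : HasSum b (∑' s, b (s + 1)) := by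
    simpa [b, a_zero_right] using (hasSum_nat_add_iff 1).mp hasSum_succ
  rw [← hasSum_nat_add_iff' 1, cast_eq]
  convert! (hasSum_succ.mul_left (1 / (m + 1) : ℝ)).sub
    (hasSum_b.mul_left (m / (m + 1) ^ 2 : ℝ)) using 1
  · ext s
    rw [sum_topIncrement_succ, ← hm]
    simp only [b, inv_pow]
    field_simp
    ring
  · simp only [Finset.range_one, Finset.sum_singleton, topIncrement, Finset.sum_const,
      Finset.card_univ, Fintype.card_unique, inv_pow, starRate, cast_eq, Nat.add_sub_cancel, b]
    generalize ∑' s, (a m (s + 1) : ℝ) / (m + 1) ^ (s + 1) = S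
    field_simp
    ring

end Words

section Heights

variable {V : Type*} [Fintype V] (G : SimpleGraph V) (h₀ : V → ℕ) (x : ℕ → V)

/-- The maximal height of the deposition process at a given time. -/
noncomputable def maxHeight (k : ℕ) : ℕ := Finset.univ.sup (heightProcess G h₀ x k)

local notation "H" => heightProcess G h₀ x
local notation "D" => maxHeight G h₀ x

lemma heightProcess_le_maxHeight (k : ℕ) (v : V) : H k v ≤ D k :=
  Finset.le_sup (Finset.mem_univ v)

variable {x}

lemma heightProcess_succ_of_ne {k : ℕ} {v : V} (hv : v ≠ x k) : H (k + 1) v = H k v :=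
  if_neg hv

lemma heightProcess_succ_self (k : ℕ) : H (k + 1) (x k) =
    1 + Finset.univ.sup fun y => if y = x k ∨ G.Adj (x k) y then H k y else 0 :=
  if_pos rfl

lemma heightProcess_lt_succ_of_adj {k : ℕ} {y : V} (hy : y = x k ∨ G.Adj (x k) y) :
    H k y < H (k + 1) (x k) := by
  rw [heightProcess_succ_self, add_comm, Nat.lt_succ_iff]
  have le_sup := Finset.le_sup (f := fun y => if y = x k ∨ G.Adj (x k) y then H k y else 0)
    (Finset.mem_univ y)
  rwa [if_pos hy] at le_sup

lemma heightProcess_succ_le (k : ℕ) (v : V) : H (k + 1) v ≤ D k + 1 := by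
  by_cases hv : v = x k
  · rw [hv, heightProcess_succ_self, add_comm]
    gcongr
    refine Finset.sup_le fun y _ => ?_
    split_ifs
    exacts [heightProcess_le_maxHeight G h₀ x k y, Nat.zero_le _]
  · rw [heightProcess_succ_of_ne G h₀ hv]
    exact (heightProcess_le_maxHeight G h₀ x k v).trans (Nat.le_succ _)

lemma heightProcess_monotone (v : V) : Monotone fun k => H k v := by
  refine monotone_nat_of_le_succ fun k => ?_
  by_cases hv : v = x k
  · rw [hv]
    exact (heightProcess_lt_succ_of_adj G h₀ (.inl rfl)).le
  · exact (heightProcess_succ_of_ne G h₀ hv).ge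

lemma maxHeight_monotone : Monotone D := fun _ _ hkl =>
  Finset.sup_mono_fun fun v _ => heightProcess_monotone G h₀ v hkl

lemma maxHeight_add_le (k l : ℕ) : D (k + l) ≤ D k + l := by
  induction l with
  | zero => rfl
  | succ l ih =>
    exact (Finset.sup_le fun v _ => heightProcess_succ_le G h₀ (k + l) v).trans
      (Nat.succ_le_succ ih)

end Heights

section Star

variable {V : Type*}

/-- `G` is a star with centre `c`: its edges are exactly the pairs formed by `c` and another
vertex. -/
def IsStar (G : SimpleGraph V) (c : V) : Prop := ∀ v w, G.Adj v w ↔ v ≠ w ∧ (v = c ∨ w = c)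

namespace IsStar

variable {G : SimpleGraph V} {c : V}

lemma center_adj (hG : IsStar G c) {v : V} (hv : v ≠ c) : G.Adj c v :=
  (hG c v).mpr ⟨hv.symm, .inl rfl⟩

lemma eq_center_of_adj (hG : IsStar G c) {v w : V} (hv : v ≠ c) (h : G.Adj v w) : w = c :=
  ((hG v w).mp h).2.resolve_left hv

variable [Fintype V] (hG : IsStar G c) (h₀ : V → ℕ) {x : ℕ → V}

local notation "H" => heightProcess G h₀ x
local notation "D" => maxHeight G h₀ x

include hG

lemma heightProcess_succ_center {k : ℕ} (hk : x k = c) : H (k + 1) c = D k + 1 := by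
  subst hk
  rw [heightProcess_succ_self, maxHeight, add_comm]
  exact congrArg (Finset.univ.sup · + 1)
    (funext fun y => if_pos (or_iff_not_imp_left.mpr hG.center_adj))

lemma maxHeight_succ_of_center {k : ℕ} (hk : x k = c) : D (k + 1) = D k + 1 :=
  le_antisymm (maxHeight_add_le G h₀ k 1)
    ((hG.heightProcess_succ_center h₀ hk).ge.trans (heightProcess_le_maxHeight G h₀ x _ c))

lemma heightProcess_succ_leaf {k : ℕ} (hk : x k ≠ c) :
    H (k + 1) (x k) = max (H k (x k)) (H k c) + 1 := by
  refine le_antisymm ?_ ?_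
  · rw [heightProcess_succ_self, add_comm]
    gcongr
    refine Finset.sup_le fun y _ => ?_
    split_ifs with hy
    · obtain rfl | hy := hy
      · exact le_max_left _ _
      · rw [hG.eq_center_of_adj hk hy]
        exact le_max_right _ _
    · exact Nat.zero_le _
  · exact max_lt (heightProcess_lt_succ_of_adj G h₀ (.inl rfl))
      (heightProcess_lt_succ_of_adj G h₀ (.inr (hG.center_adj hk).symm))

lemma heightProcess_excursion {t s : ℕ} (ht : x t = c) (w : Fin s → {v // v ≠ c})
    (hw : ∀ i : Fin s, x (t + 1 + i) = w i) :
    H (t + 1 + s) c = D (t + 1) ∧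
      ∀ j : {v // v ≠ c}, max (H (t + 1 + s) j) (D (t + 1)) = D (t + 1) + letterCount w j := by
  induction s with
  | zero =>
    refine ⟨?_, fun j => ?_⟩
    · rw [add_zero, hG.heightProcess_succ_center h₀ ht, hG.maxHeight_succ_of_center h₀ ht]
    · rw [max_eq_right (heightProcess_le_maxHeight G h₀ x _ _),
        Nat.le_zero.mp (letterCount_le w j)]
      rfl
  | succ s ih =>
    obtain ⟨ih_center, ih_leaf⟩ := ih (Fin.init w) fun i => hw i.castSucc
    have last : x (t + 1 + s) = w (Fin.last s) := hw (Fin.last s)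
    have last_ne : x (t + 1 + s) ≠ c := last ▸ (w (Fin.last s)).2
    refine ⟨(heightProcess_succ_of_ne G h₀ last_ne.symm).trans ih_center, fun j => ?_⟩
    rw [letterCount_succ, ← add_assoc (D _), ← ih_leaf j, ← add_assoc (t + 1)]
    obtain rfl | hj := eq_or_ne (w (Fin.last s)) j
    · rw [if_pos rfl, ← last, hG.heightProcess_succ_leaf h₀ last_ne, ih_center]
      exact max_eq_left (Nat.le_succ_of_le (le_max_right _ _))
    · have hj' : (j : V) ≠ x (t + 1 + s) := last ▸ Subtype.coe_injective.ne hj.symm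
      rw [if_neg hj, heightProcess_succ_of_ne G h₀ hj', add_zero]

lemma maxHeight_excursion {t s : ℕ} (ht : x t = c) (w : Fin s → {v // v ≠ c})
    (hw : ∀ i : Fin s, x (t + 1 + i) = w i) :
    D (t + 1 + s) = D (t + 1) + maxCount w := by
  obtain ⟨h_center, h_leaf⟩ := hG.heightProcess_excursion h₀ ht w hw
  apply le_antisymm
  · refine Finset.sup_le fun v _ => ?_
    obtain rfl | hv := eq_or_ne v c
    · exact h_center.trans_le (Nat.le_add_right _ _)
    · exact (le_max_left _ _).trans ((h_leaf ⟨v, hv⟩).trans_le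
        (Nat.add_le_add_left (Finset.le_sup (Finset.mem_univ _)) _))
  · have start_le : D (t + 1) ≤ D (t + 1 + s) := maxHeight_monotone G h₀ (Nat.le_add_right _ _)
    rw [← Nat.le_sub_iff_add_le' start_le]
    refine Finset.sup_le fun j _ => ?_
    rw [Nat.le_sub_iff_add_le' start_le, ← h_leaf j]
    exact max_le (heightProcess_le_maxHeight G h₀ x _ _) start_le

lemma maxHeight_succ_sub {t s : ℕ} (w : Fin s → {v // v ≠ c})
    (hw : t ∈ occurrences x (visitWord c w)) :
    (D (t + s + 1) : ℝ) - D (t + s) = topIncrement w := by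
  obtain ⟨ht, hw⟩ := mem_occurrences_visitWord.mp hw
  cases s with
  | zero => simp [topIncrement, hG.maxHeight_succ_of_center h₀ ht]
  | succ s =>
    rw [show t + (s + 1) + 1 = t + 1 + (s + 1) by ring, show t + (s + 1) = t + 1 + s by ring,
      hG.maxHeight_excursion h₀ ht w hw,
      hG.maxHeight_excursion h₀ ht (Fin.init w) fun i => hw i.castSucc]
    simp [topIncrement]

end IsStar

end Star

section Growth

variable {V : Type*} [Fintype V] {G : SimpleGraph V} {c : V} (hG : IsStar G c) (h₀ : V → ℕ)
  {x : ℕ → V}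

local notation "H" => heightProcess G h₀ x
local notation "D" => maxHeight G h₀ x

include hG

namespace IsStar

lemma tendsto_maxHeight_div (hx : IsNormal x) :
    Tendsto (fun N : ℕ => (D N : ℝ) / N) atTop
      (𝓝 ((Fintype.card V : ℝ)⁻¹ * starRate (Fintype.card V))) := by
  have increment_mem (k : ℕ) : |(D (k + 1) : ℝ) - D k| ≤ 1 := by
    have lower : (D k : ℝ) ≤ D (k + 1) := by
      exact_mod_cast maxHeight_monotone G h₀ k.le_succ
    have upper : (D (k + 1) : ℝ) ≤ D k + 1 := by exact_mod_cast maxHeight_add_le G h₀ k 1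
    exact abs_le.mpr ⟨by linarith, by linarith⟩
  have average := hx.hasAverage_of_hasSum increment_mem
    (fun s w t ht => hG.maxHeight_succ_sub h₀ w ht) (hasSum_topIncrement _ (card_ne_add_one c))
  have start : Tendsto (fun N : ℕ => (D 0 : ℝ) / N) atTop (𝓝 0) :=
    tendsto_const_div_atTop_nhds_zero_nat _
  rw [← add_zero (_ * _)]
  refine (average.add start).congr fun N => ?_
  rw [Finset.sum_range_sub (fun k => (D k : ℝ)), ← add_div, sub_add_cancel]

lemma maxHeight_le_heightProcess_add {k : ℕ} {v : V} (hk : k ∈ occurrences x ![c, v]) {N : ℕ}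
    (hN : k < N) : D (N + 1) ≤ H (N + 1) v + (N - k) := by
  have visit : x k = c := hk 0
  have next : x (k + 1) = v := hk 1
  have pick_up : D (k + 1) ≤ H (k + 2) v := by
    rw [hG.maxHeight_succ_of_center h₀ visit, ← hG.heightProcess_succ_center h₀ visit, ← next]
    refine (heightProcess_lt_succ_of_adj G h₀ ?_).le
    exact or_iff_not_imp_left.mpr fun hne => (hG.center_adj (Ne.symm hne)).symm
  calc D (N + 1) = D (k + 1 + (N - k)) := by congr 1; omega
    _ ≤ D (k + 1) + (N - k) := maxHeight_add_le G h₀ _ _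
    _ ≤ H (N + 1) v + (N - k) := by
      gcongr
      exact pick_up.trans (heightProcess_monotone G h₀ v (by omega))

lemma eventually_maxHeight_le (hx : IsNormal x) (v : V) {ε : ℝ} (hε : 0 < ε) :
    ∀ᶠ N : ℕ in atTop, (D N : ℝ) ≤ H N v + ε * N := by
  have : Nonempty V := ⟨v⟩
  rw [← map_add_atTop_eq_nat 1, eventually_map]
  filter_upwards [(hx 2 ![c, v]).eventually_exists_mem (b := 1 - ε) (by positivity)
    (by linarith)] with N ⟨k, hk, hkN, hNk⟩
  have deficit : (D (N + 1) : ℝ) ≤ H (N + 1) v + (N - k) := by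
    rw [← Nat.cast_sub hkN.le]
    exact_mod_cast hG.maxHeight_le_heightProcess_add h₀ hk hkN
  push_cast
  linarith

lemma tendsto_heightProcess_div (hx : IsNormal x) (v : V) :
    Tendsto (fun N : ℕ => (H N v : ℝ) / N) atTop
      (𝓝 ((Fintype.card V : ℝ)⁻¹ * starRate (Fintype.card V))) := by
  have deficit : Tendsto (fun N : ℕ => (D N : ℝ) / N - (H N v : ℝ) / N) atTop (𝓝 0) := by
    refine tendsto_order.mpr ⟨fun b hb => ?_, fun b hb => ?_⟩
    · refine Eventually.of_forall fun N => hb.trans_le (sub_nonneg.mpr ?_)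
      gcongr
      exact heightProcess_le_maxHeight G h₀ x N v
    · filter_upwards [hG.eventually_maxHeight_le h₀ hx v (half_pos hb),
        eventually_gt_atTop 0] with N hN hN0
      have hN0' : (0 : ℝ) < N := by exact_mod_cast hN0
      rw [← sub_div, div_lt_iff₀ hN0']
      nlinarith
  simpa using (hG.tendsto_maxHeight_div h₀ hx).sub deficit

end IsStar

end Growth

section LawOfLargeNumbers

variable {Ω : Type*} [MeasurableSpace Ω] {μ : Measure Ω} [IsProbabilityMeasure μ]

lemma identDistrib_indicator_one {E F : Set Ω} (hE : MeasurableSet E) (hF : MeasurableSet F)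
    (h : μ E = μ F) :
    ProbabilityTheory.IdentDistrib (E.indicator (1 : Ω → ℝ)) (F.indicator 1) μ μ := by
  have measurable_E : Measurable (E.indicator (1 : Ω → ℝ)) := measurable_one.indicator hE
  have measurable_F : Measurable (F.indicator (1 : Ω → ℝ)) := measurable_one.indicator hF
  have compl_eq : μ Eᶜ = μ Fᶜ := by rw [prob_compl_eq_one_sub hE, prob_compl_eq_one_sub hF, h]
  refine ⟨measurable_E.aemeasurable, measurable_F.aemeasurable, Measure.ext fun s hs => ?_⟩
  rw [Measure.map_apply measurable_E hs, Measure.map_apply measurable_F hs]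
  simp only [Pi.one_def, Set.indicator_const_preimage_eq_union]
  split_ifs <;> simp [h, compl_eq]

lemma ae_hasDensity_of_iIndepSet {E : ℕ → Set Ω} (hE : ∀ j, MeasurableSet (E j))
    (h_indep : ProbabilityTheory.iIndepSet E μ) {p : ℝ≥0∞} (hp : ∀ j, μ (E j) = p) :
    ∀ᵐ ω ∂μ, HasDensity {j | ω ∈ E j} p.toReal := by
  have indep : ProbabilityTheory.iIndepFun (fun j => (E j).indicator (1 : Ω → ℝ)) μ :=
    h_indep.iIndepFun_indicator
  have slln := ProbabilityTheory.strong_law_ae_real (fun j => (E j).indicator (1 : Ω → ℝ))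
    ((integrable_const 1).indicator (hE 0)) (fun i j hij => indep.indepFun hij)
    fun j => identDistrib_indicator_one (hE j) (hE 0) ((hp j).trans (hp 0).symm)
  rw [integral_indicator_one (hE 0), measureReal_def, hp 0] at slln
  exact slln

end LawOfLargeNumbers

section UniformIID

variable {V : Type*} [Fintype V] {Ω : Type*} [MeasurableSpace Ω] {μ : Measure Ω} {X : ℕ → Ω → V}

namespace IsUniformIID

lemma measurableSet_forall_comp_eq {κ : Type*} [Countable κ] (hX : IsUniformIID μ X) (e : κ → ℕ)
    (f : κ → V) : MeasurableSet {ω | ∀ i, X (e i) ω = f i} := by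
  simpa only [Set.ofPred_forall] using MeasurableSet.iInter fun i => hX.1 (e i) (f i)

lemma measurableSet_mem_occurrences (hX : IsUniformIID μ X) {l : ℕ} (u : Fin l → V) (t : ℕ) :
    MeasurableSet {ω | t ∈ occurrences (fun k => X k ω) u} :=
  hX.measurableSet_forall_comp_eq _ u

lemma measure_forall_mem_eq_sum (hX : IsUniformIID μ X) {S : Finset ℕ} {b : ℕ} (hb : b ∉ S)
    (f : ℕ → V) : μ {ω | ∀ k ∈ S, X k ω = f k} =
      ∑ v, μ {ω | ∀ k ∈ insert b S, X k ω = Function.update f b v k} := by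
  have forall_insert (v : V) : {ω | ∀ k ∈ insert b S, X k ω = Function.update f b v k} =
      {ω | X b ω = v} ∩ {ω | ∀ k ∈ S, X k ω = f k} := by
    ext ω
    simp only [Finset.forall_mem_insert, Function.update_self, Set.mem_inter_iff,
      Set.mem_ofPred_eq]
    refine and_congr_right fun _ => forall₂_congr fun k hk => ?_
    rw [Function.update_of_ne (ne_of_mem_of_not_mem hk hb)]
  simp only [forall_insert, ← Measure.restrict_apply (hX.1 b _)]
  have fibers := sum_measure_preimage_singleton (μ := μ.restrict {ω | ∀ k ∈ S, X k ω = f k})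
    Finset.univ (f := X b) fun v _ => hX.1 b v
  rw [Finset.coe_univ, Set.preimage_univ, Measure.restrict_apply_univ] at fibers
  exact fibers.symm

variable [Nonempty V]

lemma measure_forall_mem_eq (hX : IsUniformIID μ X) (S : Finset ℕ) (f : ℕ → V) :
    μ {ω | ∀ k ∈ S, X k ω = f k} = (Fintype.card V : ℝ≥0∞)⁻¹ ^ #S := by
  obtain ⟨N, hN⟩ := S.exists_nat_subset_range
  have law_sdiff (T : Finset ℕ) (f : ℕ → V) :
      μ {ω | ∀ k ∈ Finset.range N \ T, X k ω = f k} =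
        (Fintype.card V : ℝ≥0∞)⁻¹ ^ #(Finset.range N \ T) := by
    induction T using Finset.induction_on generalizing f with
    | empty => simpa using hX.2 N f
    | insert b T _ ih =>
      rw [Finset.sdiff_insert]
      by_cases hb : b ∈ Finset.range N \ T
      · rw [hX.measure_forall_mem_eq_sum (Finset.notMem_erase b _), Finset.insert_erase hb]
        simp only [ih]
        rw [Finset.sum_const, Finset.card_univ, nsmul_eq_mul, ← Finset.card_erase_add_one hb,
          pow_succ', ← mul_assoc, ENNReal.mul_inv_cancel (by simp) (ENNReal.natCast_ne_top _),
          one_mul]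
      · rw [Finset.erase_eq_of_notMem hb, ih]
  simpa only [Finset.sdiff_sdiff_eq_self hN] using law_sdiff (Finset.range N \ S) f

lemma measure_forall_comp_eq (hX : IsUniformIID μ X) {κ : Type*} [Fintype κ] {e : κ → ℕ}
    (he : Function.Injective e) (f : κ → V) :
    μ {ω | ∀ i, X (e i) ω = f i} = (Fintype.card V : ℝ≥0∞)⁻¹ ^ Fintype.card κ := by
  obtain ⟨v⟩ := ‹Nonempty V›
  have law := hX.measure_forall_mem_eq (Finset.univ.map ⟨e, he⟩) (Function.extend e f fun _ => v)
  simpa [he.extend_apply] using law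

lemma measure_mem_occurrences (hX : IsUniformIID μ X) {l : ℕ} (u : Fin l → V) (t : ℕ) :
    μ {ω | t ∈ occurrences (fun k => X k ω) u} = (Fintype.card V : ℝ≥0∞)⁻¹ ^ l := by
  have window_injective : Function.Injective fun i : Fin l => t + i :=
    (add_right_injective t).comp Fin.val_injective
  exact (hX.measure_forall_comp_eq window_injective u).trans (by rw [Fintype.card_fin])

lemma iIndepSet_mem_occurrences (hX : IsUniformIID μ X) {l : ℕ} (u : Fin l → V) (r : ℕ) :
    ProbabilityTheory.iIndepSet
      (fun j => {ω | j * (l + 1) + r ∈ occurrences (fun k => X k ω) u}) μ := by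
  refine (ProbabilityTheory.iIndepSet_iff_meas_biInter fun j =>
    hX.measurableSet_mem_occurrences u _).mpr fun s => ?_
  have block_injective :
      Function.Injective fun q : s × Fin l => (q.1 : ℕ) * (l + 1) + r + q.2 := by
    rintro ⟨⟨j, hj⟩, i⟩ ⟨⟨j', hj'⟩, i'⟩ h
    have division : (Nat.divModEquiv (l + 1)).symm (j, i.castSucc) =
        (Nat.divModEquiv (l + 1)).symm (j', i'.castSucc) := by
      simp only [Nat.divModEquiv_symm_apply, Fin.val_castSucc]
      dsimp only at h
      omega
    simpa using (Nat.divModEquiv (l + 1)).symm.injective division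
  have joint := hX.measure_forall_comp_eq block_injective fun q => u q.2
  rw [Finset.prod_congr rfl fun j _ => hX.measure_mem_occurrences u _, Finset.prod_const,
    ← pow_mul']
  convert joint using 2
  · ext ω
    simp [occurrences]
  · simp

theorem ae_isNormal [IsProbabilityMeasure μ] (hX : IsUniformIID μ X) :
    ∀ᵐ ω ∂μ, IsNormal fun k => X k ω := by
  refine ae_all_iff.mpr fun l => ae_all_iff.mpr fun u => ?_
  have blocks : ∀ᵐ ω ∂μ, ∀ r, HasDensity
      {j | j * (l + 1) + r ∈ occurrences (fun k => X k ω) u} ((Fintype.card V : ℝ)⁻¹ ^ l) := by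
    refine ae_all_iff.mpr fun r => ?_
    simpa using ae_hasDensity_of_iIndepSet (fun j => hX.measurableSet_mem_occurrences u _)
      (hX.iIndepSet_mem_occurrences u r) fun j => hX.measure_mem_occurrences u _
  filter_upwards [blocks] with ω hω
  exact HasAverage.of_blocks (Set.indicator_nonneg fun _ _ => zero_le_one) l.succ_pos
    fun r _ => hω r

end IsUniformIID

end UniformIID

section GrowthRate

theorem isGrowthRate_of_tendsto {V : Type*} [Fintype V] [Nonempty V] {G : SimpleGraph V} {γ : ℝ}
    (hγ : 0 < γ)
    (h : ∀ x, IsNormal x → ∀ v, Tendsto (fun N : ℕ => (heightProcess G (fun _ => 0) x N v : ℝ) / N)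
      atTop (𝓝 ((Fintype.card V : ℝ)⁻¹ * γ))) : IsGrowthRate G γ := by
  have rescaled {x : ℕ → V} (hx : IsNormal x) (v : V) : Tendsto (fun N : ℕ =>
      (heightProcess G (fun _ => 0) x N v : ℝ) * (Fintype.card V / N : ℝ)) atTop (𝓝 γ) := by
    have card_ne : (Fintype.card V : ℝ) ≠ 0 := by simp
    have scaled := (h x hx v).const_mul (Fintype.card V : ℝ)
    rw [mul_inv_cancel_left₀ card_ne] at scaled
    exact scaled.congr fun N => by ring
  refine ⟨hγ, fun μ _ X hX => ⟨?_, ?_⟩⟩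
  · filter_upwards [hX.ae_isNormal] with ω hω
    have sup_tendsto := Tendsto.finset_sup'_nhds_apply Finset.univ_nonempty
      fun v _ => rescaled hω v
    rw [Finset.sup'_const] at sup_tendsto
    refine sup_tendsto.congr fun N => ?_
    rw [Finset.sup'_univ_eq_ciSup, ← Real.iSup_mul_of_nonneg (by positivity), mul_comm,
      div_mul_eq_mul_div]
  · filter_upwards [hX.ae_isNormal] with ω hω
    have inf_tendsto := Tendsto.finset_inf'_nhds_apply Finset.univ_nonempty
      fun v _ => rescaled hω v
    rw [Finset.inf'_const] at inf_tendsto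
    refine inf_tendsto.congr fun N => ?_
    rw [Finset.inf'_univ_eq_ciInf, ← Real.iInf_mul_of_nonneg (by positivity), mul_comm,
      div_mul_eq_mul_div]

lemma starRate_pos (n : ℕ) : 0 < starRate n :=
  add_pos_of_pos_of_nonneg one_pos
    (mul_nonneg (by positivity) (tsum_nonneg fun k => by positivity))

lemma isStar_starGraph (n : ℕ) [NeZero n] : IsStar (starGraph n) 0 := by
  intro v w
  simp [starGraph, ← Fin.val_eq_zero_iff]

theorem stmt5_general {V : Type*} [Fintype V] {G : SimpleGraph V} {c : V} (hG : IsStar G c) :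
    IsGrowthRate G (starRate (Fintype.card V)) :=
  have : Nonempty V := ⟨c⟩
  isGrowthRate_of_tendsto (starRate_pos _) fun _ hx => hG.tendsto_heightProcess_div _ hx

end GrowthRate

theorem stmt5 (n : ℕ) (hn : 3 ≤ n) :
    IsGrowthRate (starGraph n)
      (1 + (1 / (n : ℝ)) * ∑' k : ℕ, (a (n - 1) (k + 1) : ℝ) / (n : ℝ) ^ (k + 1)) := by
  have : NeZero n := ⟨by omega⟩
  simpa only [Fintype.card_fin, starRate] using stmt5_general (isStar_starGraph n)
end
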